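/- Chernoff/Trotter product formula: Let H be a complex Hilbert space. Let S, T, U : [0,∞) → B(H) be strongly continuous one-parameter contraction semigroups (i.e. each maps 0 to the identity, satisfies S(s+t) = S(s)∘S(t), has operator norm at most 1 for every t, and t ↦ S(t)x is continuous for every x ∈ H). Let A, B, C be their generators, i.e. the unbounded operators (linear partial maps) whose domain consists of exactly those x ∈ H for which the right derivative of t ↦ S(t)x (resp. T(t)x, U(t)x) at t = 0 exists, the operator value being that derivative. Assume that the algebraic sum A + B (defined on the intersection of the domains of A and B) is closable and that its closure equals C. Then for every x ∈ H and every t ≥ 0, (S(t/n)∘T(t/n))ⁿ x converges to U(t)x in H as n → ∞. -/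

import Mathlib

open Filter Topology

/-- A strongly continuous one-parameter contraction semigroup on `[0,∞)`. -/
def IsContractionSemigroup {H : Type*} [NormedAddCommGroup H] [InnerProductSpace ℂ H]
    (S : ℝ → H →L[ℂ] H) : Prop :=
  S 0 = ContinuousLinearMap.id ℂ H ∧
  (∀ s t : ℝ, 0 ≤ s → 0 ≤ t → S (s + t) = (S s).comp (S t)) ∧
  (∀ t : ℝ, 0 ≤ t → ‖S t‖ ≤ 1) ∧
  (∀ x : H, ContinuousOn (fun t : ℝ => S t x) (Set.Ici 0))

/-- `A` is the generator of the semigroup `S`: its domain consists exactly of those `x`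
for which the right derivative of `t ↦ S t x` at `t = 0` exists, and `A x` is that
derivative. -/
def IsGeneratorOf {H : Type*} [NormedAddCommGroup H] [InnerProductSpace ℂ H]
    (A : H →ₗ.[ℂ] H) (S : ℝ → H →L[ℂ] H) : Prop :=
  (∀ x : H, x ∈ A.domain ↔
      ∃ y : H, Tendsto (fun t : ℝ => t⁻¹ • (S t x - x)) (𝓝[>] 0) (𝓝 y)) ∧
  (∀ x : A.domain,
      Tendsto (fun t : ℝ => t⁻¹ • (S t (x : H) - (x : H))) (𝓝[>] 0) (𝓝 (A x)))

/-!
Chernoff's argument, arranged so that only resolvents of the discrete steps are needed. Write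
`F h = S h ∘ T h`, `G h = h⁻¹ (F h - 1)` and `R h = (1 - G h)⁻¹`; since `F h` is a contraction,
`R h` exists and is a contraction. On the core `dom (A + B)` the operators `G h` converge to
`A + B`, so `R h (x - y) → x` for `(x, y)` in the graph of `A + B`, hence, by equicontinuity, in its
closure, the graph of `C`. For `v ∈ dom C` and `h = t / n`, the identity
`F h * R h = R h + h (R h - 1)` bounds the error of one step,
`F h (R h (U s v)) - R h (U (s + h) v)`, by `h * o(1)` uniformly in `s ∈ [0, t]`. Summing over `n`
steps gives `F h ^ n (R h v) - R h (U t v) → 0`, first for `v ∈ dom C`, then for every `v` by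
density. Choosing `v = x - C x` turns this into `F h ^ n x → U t x` on `dom C`, and density
concludes.
-/

theorem tendsto_div_natCast_nhdsGT_zero {t : ℝ} (ht : 0 < t) :
    Tendsto (fun n : ℕ ↦ t / n) atTop (𝓝[>] 0) :=
  tendsto_nhdsWithin_iff.2 ⟨tendsto_const_div_atTop_nhds_zero_nat t, by
    filter_upwards [eventually_gt_atTop 0] with n hn
    exact div_pos ht (Nat.cast_pos.2 hn)⟩

theorem tendsto_inv_smul_integral_nhdsGT_zero {E : Type*} [NormedAddCommGroup E] [NormedSpace ℝ E]
    [CompleteSpace E] {f : ℝ → E} (hf : Continuous f) (a : ℝ) :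
    Tendsto (fun h : ℝ ↦ h⁻¹ • ∫ s in a..a + h, f s) (𝓝[>] 0) (𝓝 (f a)) := by
  simpa using (hf.integral_hasStrictDerivAt a a).hasDerivAt.tendsto_slope_zero_right

section Equicontinuity

variable {ι X 𝕜 E F : Type*} [NontriviallyNormedField 𝕜] [SeminormedAddCommGroup E]
  [NormedSpace 𝕜 E] [SeminormedAddCommGroup F] [NormedSpace 𝕜 F] {l : Filter ι}
  {L : ι → E →L[𝕜] F} {M : ℝ}

theorem equicontinuous_of_opNorm_le (hL : ∀ i, ‖L i‖ ≤ M) : Equicontinuous fun i ↦ ⇑(L i) :=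
  have hTFAE : (∃ C, ∀ i, ‖L i‖ ≤ C) ↔ Equicontinuous fun i ↦ ⇑(L i) :=
    (NormedSpace.equicontinuous_TFAE L).out 5 1
  hTFAE.1 ⟨M, hL⟩

theorem tendsto_apply_of_mem_closure_of_opNorm_le (hL : ∀ i, ‖L i‖ ≤ M) {f : E → F}
    (hf : Continuous f) {s : Set E} (hs : ∀ x ∈ s, Tendsto (L · x) l (𝓝 (f x))) {x : E}
    (hx : x ∈ closure s) : Tendsto (L · x) l (𝓝 (f x)) :=
  closure_minimal hs ((equicontinuous_of_opNorm_le hL).isClosed_setOfPred_tendsto hf) hx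

theorem tendstoUniformlyOn_apply_comp_of_opNorm_le [TopologicalSpace X] (hL : ∀ i, ‖L i‖ ≤ M)
    {K : Set X} (hK : IsCompact K) {g : X → E} (hg : ContinuousOn g K) {f : X → F}
    (hf : ∀ x ∈ K, Tendsto (fun i ↦ L i (g x)) l (𝓝 (f x))) :
    TendstoUniformlyOn (fun i x ↦ L i (g x)) f l K := by
  have hequi : EquicontinuousOn (fun i x ↦ L i (g x)) K := fun x hx V hV ↦
    (hg x hx).eventually (equicontinuous_of_opNorm_le hL (g x) V hV)
  have hpi : Tendsto ((⋃₀ {K}).domRestrict ∘ fun i x ↦ L i (g x)) l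
      (𝓝 ((⋃₀ {K}).domRestrict f)) :=
    tendsto_pi_nhds.2 fun x ↦ hf x (by simpa using x.2)
  exact UniformOnFun.tendsto_iff_tendstoUniformlyOn.1
    ((EquicontinuousOn.tendsto_uniformOnFun_iff_pi' (by simpa using hK) (by simpa using hequi)
      l f).2 hpi) K rfl

end Equicontinuity

section Contraction

variable {𝕜 E : Type*} [NontriviallyNormedField 𝕜] [SeminormedAddCommGroup E] [NormedSpace 𝕜 E]
  {L : E →L[𝕜] E}

theorem norm_apply_le_of_opNorm_le_one (hL : ‖L‖ ≤ 1) (x : E) : ‖L x‖ ≤ ‖x‖ := by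
  simpa using L.le_of_opNorm_le hL x

theorem opNorm_pow_le_one (hL : ‖L‖ ≤ 1) (n : ℕ) : ‖L ^ n‖ ≤ 1 := by
  induction n with
  | zero => exact ContinuousLinearMap.norm_id_le
  | succ n ih => exact (norm_mul_le _ _).trans (mul_le_one₀ ih (norm_nonneg _) hL)

theorem norm_pow_apply_sub_le (hL : ‖L‖ ≤ 1) {y : ℕ → E} {δ : ℝ} {n : ℕ}
    (hy : ∀ k < n, ‖L (y k) - y (k + 1)‖ ≤ δ) : ‖(L ^ n) (y 0) - y n‖ ≤ n * δ := by
  induction n with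
  | zero => simp
  | succ n ih =>
    calc ‖(L ^ (n + 1)) (y 0) - y (n + 1)‖
        = ‖L ((L ^ n) (y 0) - y n) + (L (y n) - y (n + 1))‖ := by
          rw [pow_succ', mul_apply_eq_comp, map_sub, sub_add_sub_cancel]
      _ ≤ n * δ + δ := norm_add_le_of_le
          ((norm_apply_le_of_opNorm_le_one hL _).trans (ih fun k hk ↦ hy k (by lia)))
          (hy n (by lia))
      _ = (n + 1 : ℕ) * δ := by push_cast; ring

end Contraction

section Semigroup

variable {𝕜 E : Type*} [RCLike 𝕜] [NormedAddCommGroup E] [NormedSpace 𝕜 E]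

/-- A strongly continuous one-parameter contraction semigroup on a normed space. On complex inner
product spaces this is `IsContractionSemigroup`. -/
structure IsContractionC0Semigroup (S : ℝ → E →L[𝕜] E) : Prop where
  map_zero : S 0 = 1
  map_add : ∀ {s t : ℝ}, 0 ≤ s → 0 ≤ t → S (s + t) = S s ∘L S t
  opNorm_le_one : ∀ {t : ℝ}, 0 ≤ t → ‖S t‖ ≤ 1
  continuousOn_apply : ∀ x, ContinuousOn (fun t ↦ S t x) (Set.Ici 0)

namespace IsContractionC0Semigroup

variable {U : ℝ → E →L[𝕜] E}

theorem apply_add (hU : IsContractionC0Semigroup U) {s t : ℝ} (hs : 0 ≤ s) (ht : 0 ≤ t) (x : E) :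
    U (s + t) x = U s (U t x) := by
  rw [hU.map_add hs ht, ContinuousLinearMap.comp_apply]

theorem norm_apply_le (hU : IsContractionC0Semigroup U) {t : ℝ} (ht : 0 ≤ t) (x : E) :
    ‖U t x‖ ≤ ‖x‖ :=
  norm_apply_le_of_opNorm_le_one (hU.opNorm_le_one ht) x

theorem tendsto_apply_nhdsGT_zero (hU : IsContractionC0Semigroup U) (x : E) :
    Tendsto (fun t ↦ U t x) (𝓝[>] 0) (𝓝 x) := by
  have h0 : ContinuousWithinAt (fun t ↦ U t x) (Set.Ioi 0) 0 :=
    (hU.continuousOn_apply x 0 Set.self_mem_Ici).mono Set.Ioi_subset_Ici_self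
  simpa only [ContinuousWithinAt, hU.map_zero, one_apply_eq_self] using h0

/-- Orbits are prolonged to `ℝ` by `s ↦ U (max s 0) x`, so that they can be integrated and
differentiated as continuous functions on the whole line. -/
theorem continuous_apply_max_zero (hU : IsContractionC0Semigroup U) (x : E) :
    Continuous fun s : ℝ ↦ U (max s 0) x :=
  (hU.continuousOn_apply x).comp_continuous (by fun_prop) fun s ↦ Set.mem_Ici.2 (le_max_right s 0)

theorem apply_integral [NormedSpace ℝ E] [CompleteSpace E] (hU : IsContractionC0Semigroup U) (x : E)
    {a h : ℝ} (ha : 0 ≤ a) (hh : 0 ≤ h) :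
    U h (∫ s in 0..a, U (max s 0) x) = ∫ s in h..a + h, U (max s 0) x := by
  have hshift : Set.EqOn (fun s ↦ U h (U (max s 0) x)) (fun s ↦ U (max (s + h) 0) x)
      (Set.uIcc 0 a) := fun s hs ↦ by
    have hs0 : 0 ≤ s := (Set.uIcc_of_le ha ▸ hs).1
    have hsh : 0 ≤ s + h := add_nonneg hs0 hh
    simp only [max_eq_left hs0, max_eq_left hsh]
    rw [add_comm, hU.apply_add hh hs0]
  rw [← (U h).intervalIntegral_comp_comm
      ((hU.continuous_apply_max_zero x).intervalIntegrable 0 a),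
    intervalIntegral.integral_congr hshift,
    intervalIntegral.integral_comp_add_right (fun s ↦ U (max s 0) x), zero_add]

end IsContractionC0Semigroup

end Semigroup

section Generator

variable {𝕜 E : Type*} [RCLike 𝕜] [NormedAddCommGroup E] [NormedSpace 𝕜 E] [NormedSpace ℝ E]

/-- The difference quotient of a single step `L` of length `h`: a bounded approximation of the
generator. It is `0` for `h = 0`. -/
noncomputable def stepGenerator (L : E →L[𝕜] E) (h : ℝ) : E →L[𝕜] E := h⁻¹ • (L - 1)

/-- The resolvent at `1` of `stepGenerator L h`. It is a genuine inverse when `‖L‖ ≤ 1` and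
`0 ≤ h`, and the junk value `0` whenever `1 - stepGenerator L h` is not invertible. -/
noncomputable def stepResolvent (L : E →L[𝕜] E) (h : ℝ) : E →L[𝕜] E :=
  Ring.inverse (1 - stepGenerator L h)

section StepResolvent

variable {L : E →L[𝕜] E} {h : ℝ}

theorem stepGenerator_apply (L : E →L[𝕜] E) (h : ℝ) (x : E) :
    stepGenerator L h x = h⁻¹ • (L x - x) := rfl

theorem norm_le_norm_sub_stepGenerator_apply (hL : ‖L‖ ≤ 1) (hh : 0 ≤ h) (x : E) :
    ‖x‖ ≤ ‖x - stepGenerator L h x‖ := by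
  have hLx : ‖h⁻¹ • L x‖ ≤ h⁻¹ * ‖x‖ := by
    rw [norm_smul_of_nonneg (inv_nonneg.2 hh)]
    gcongr
    exact norm_apply_le_of_opNorm_le_one hL x
  calc ‖x‖ = ‖(1 + h⁻¹) • x‖ - h⁻¹ * ‖x‖ := by
        rw [norm_smul_of_nonneg (by positivity)]; ring
    _ ≤ ‖(1 + h⁻¹) • x‖ - ‖h⁻¹ • L x‖ := by gcongr
    _ ≤ ‖(1 + h⁻¹) • x - h⁻¹ • L x‖ := norm_sub_norm_le _ _
    _ = ‖x - stepGenerator L h x‖ := by rw [stepGenerator_apply]; congr 1; module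

variable [CompleteSpace E]

theorem isUnit_one_sub_stepGenerator (hL : ‖L‖ ≤ 1) (hh : 0 ≤ h) :
    IsUnit (1 - stepGenerator L h) := by
  have hpos : 0 < 1 + h⁻¹ := by positivity
  have hsmall : ‖((1 + h⁻¹)⁻¹ * h⁻¹) • L‖ < 1 := by
    rw [norm_smul, Real.norm_of_nonneg (by positivity)]
    calc (1 + h⁻¹)⁻¹ * h⁻¹ * ‖L‖ ≤ (1 + h⁻¹)⁻¹ * h⁻¹ := mul_le_of_le_one_right (by positivity) hL
      _ < 1 := by rw [inv_mul_lt_one₀ hpos]; linarith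
  have hfactor : 1 - stepGenerator L h =
      Units.mk0 (1 + h⁻¹) hpos.ne' • (1 - ((1 + h⁻¹)⁻¹ * h⁻¹) • L) := by
    rw [Units.smul_mk0, smul_sub, smul_smul, mul_inv_cancel_left₀ hpos.ne', stepGenerator]
    module
  have htower : IsScalarTower ℝ 𝕜 E := Real.isScalarTower
  rw [hfactor]
  exact (isUnit_one_sub_of_norm_lt_one hsmall).smul _

theorem stepResolvent_sub_stepGenerator_apply (hL : ‖L‖ ≤ 1) (hh : 0 ≤ h) (x : E) :
    stepResolvent L h (x - stepGenerator L h x) = x :=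
  DFunLike.congr_fun (Ring.inverse_mul_cancel _ (isUnit_one_sub_stepGenerator hL hh)) x

theorem stepResolvent_sub_stepGenerator_stepResolvent (hL : ‖L‖ ≤ 1) (hh : 0 ≤ h) (x : E) :
    stepResolvent L h x - stepGenerator L h (stepResolvent L h x) = x :=
  DFunLike.congr_fun (Ring.mul_inverse_cancel _ (isUnit_one_sub_stepGenerator hL hh)) x

theorem opNorm_stepResolvent_le_one (hL : ‖L‖ ≤ 1) (hh : 0 ≤ h) : ‖stepResolvent L h‖ ≤ 1 :=
  ContinuousLinearMap.opNorm_le_bound _ zero_le_one fun x ↦ by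
    have hle := norm_le_norm_sub_stepGenerator_apply hL hh (stepResolvent L h x)
    rwa [stepResolvent_sub_stepGenerator_stepResolvent hL hh, ← one_mul ‖x‖] at hle

theorem apply_stepResolvent (hL : ‖L‖ ≤ 1) (hh : 0 < h) (x : E) :
    L (stepResolvent L h x) = stepResolvent L h x + h • (stepResolvent L h x - x) := by
  have hres := stepResolvent_sub_stepGenerator_stepResolvent hL hh.le x
  rw [sub_eq_iff_eq_add', ← sub_eq_iff_eq_add] at hres
  rw [hres, stepGenerator_apply, smul_inv_smul₀ hh.ne', add_sub_cancel]

end StepResolvent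

/-- The set of pairs `(x, y)` such that `y` is the right derivative of `t ↦ F t x` at `0`, for a
family `F` with `F 0 = 1`. For a semigroup `F` this is the graph of its generator; for a general
`F` it is the graph on which the product formula is tested. -/
def generatorGraph (F : ℝ → E →L[𝕜] E) : Set (E × E) :=
  {p | Tendsto (fun t : ℝ ↦ t⁻¹ • (F t p.1 - p.1)) (𝓝[>] 0) (𝓝 p.2)}

/-- `A` is the generator of `S`, expressed through graphs. On complex inner product spaces this is
equivalent to `IsGeneratorOf`. -/
def IsC0GeneratorOf (A : E →ₗ.[𝕜] E) (S : ℝ → E →L[𝕜] E) : Prop :=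
  (A.graph : Set (E × E)) = generatorGraph S

theorem smul_mem_generatorGraph {F : ℝ → E →L[𝕜] E} {p : E × E} (hp : p ∈ generatorGraph F)
    (c : ℝ) : c • p ∈ generatorGraph F := by
  refine (hp.const_smul c).congr fun t ↦ ?_
  rw [Prod.smul_fst, ContinuousLinearMap.map_smul_of_tower, ← smul_sub, smul_comm]

theorem tendsto_stepResolvent_of_mem_closure_generatorGraph [CompleteSpace E]
    {F : ℝ → E →L[𝕜] E} (hF : ∀ {t : ℝ}, 0 ≤ t → ‖F t‖ ≤ 1) {ι : Type*} {l : Filter ι}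
    {h : ι → ℝ} (hh : ∀ i, 0 ≤ h i) (hlim : Tendsto h l (𝓝[>] 0)) {p : E × E}
    (hp : p ∈ closure (generatorGraph F)) :
    Tendsto (fun i ↦ stepResolvent (F (h i)) (h i) (p.1 - p.2)) l (𝓝 p.1) := by
  let R (i : ι) := stepResolvent (F (h i)) (h i)
  let D : E × E →L[𝕜] E := .fst 𝕜 E E - .snd 𝕜 E E
  have hR (i) : ‖R i‖ ≤ 1 := opNorm_stepResolvent_le_one (hF (hh i)) (hh i)
  have hRD (i) : ‖R i ∘L D‖ ≤ 1 * ‖D‖ :=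
    ((R i).opNorm_comp_le D).trans (by gcongr; exact hR i)
  refine tendsto_apply_of_mem_closure_of_opNorm_le hRD continuous_fst (fun q hq ↦ ?_) hp
  have hq0 : Tendsto (fun i ↦ ‖stepGenerator (F (h i)) (h i) q.1 - q.2‖) l (𝓝 0) :=
    tendsto_iff_norm_sub_tendsto_zero.1 (hq.comp hlim)
  refine tendsto_iff_norm_sub_tendsto_zero.2 (squeeze_zero (fun _ ↦ norm_nonneg _) (fun i ↦ ?_) hq0)
  calc ‖R i (q.1 - q.2) - q.1‖
      = ‖R i (q.1 - q.2) - R i (q.1 - stepGenerator (F (h i)) (h i) q.1)‖ := by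
        rw [stepResolvent_sub_stepGenerator_apply (hF (hh i)) (hh i)]
    _ = ‖R i (stepGenerator (F (h i)) (h i) q.1 - q.2)‖ := by
        rw [← map_sub, sub_sub_sub_cancel_left]
    _ ≤ ‖stepGenerator (F (h i)) (h i) q.1 - q.2‖ := norm_apply_le_of_opNorm_le_one (hR i) _

namespace IsContractionC0Semigroup

variable {S T U : ℝ → E →L[𝕜] E}

theorem map_mem_generatorGraph (hU : IsContractionC0Semigroup U) {x y : E}
    (hxy : (x, y) ∈ generatorGraph U) {s : ℝ} (hs : 0 ≤ s) :
    (U s x, U s y) ∈ generatorGraph U := by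
  refine (((U s).continuous.tendsto y).comp hxy).congr' ?_
  filter_upwards [self_mem_nhdsWithin] with r (hr : 0 < r)
  rw [Function.comp_apply, ContinuousLinearMap.map_smul_of_tower, map_sub,
    ← hU.apply_add hs hr.le, ← hU.apply_add hr.le hs, add_comm]

theorem comp_mem_generatorGraph (hS : IsContractionC0Semigroup S) {x y z : E}
    (hy : (x, y) ∈ generatorGraph S) (hz : (x, z) ∈ generatorGraph T) :
    (x, y + z) ∈ generatorGraph fun t ↦ S t ∘L T t := by
  have herr : Tendsto (fun t ↦ S t (t⁻¹ • (T t x - x) - z)) (𝓝[>] 0) (𝓝 0) := by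
    refine squeeze_zero_norm' ?_ (tendsto_iff_norm_sub_tendsto_zero.1 hz)
    filter_upwards [self_mem_nhdsWithin] with t (ht : 0 < t) using hS.norm_apply_le ht.le _
  have hsum := hy.add (herr.add (hS.tendsto_apply_nhdsGT_zero z))
  rw [zero_add] at hsum
  refine hsum.congr fun t ↦ ?_
  simp only [map_sub, ContinuousLinearMap.map_smul_of_tower, ContinuousLinearMap.comp_apply]
  module

variable [CompleteSpace E]

theorem integral_mem_generatorGraph (hU : IsContractionC0Semigroup U) (x : E) {a : ℝ}
    (ha : 0 ≤ a) : (∫ s in 0..a, U (max s 0) x, U a x - x) ∈ generatorGraph U := by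
  have hint (b c : ℝ) : IntervalIntegrable (fun s ↦ U (max s 0) x) MeasureTheory.volume b c :=
    (hU.continuous_apply_max_zero x).intervalIntegrable b c
  have hquot := tendsto_inv_smul_integral_nhdsGT_zero (hU.continuous_apply_max_zero x)
  have hlim := (hquot a).sub (hquot 0)
  rw [max_eq_left ha, max_self, hU.map_zero] at hlim
  refine hlim.congr' ?_
  filter_upwards [self_mem_nhdsWithin] with h (hh : 0 < h)
  rw [hU.apply_integral x ha hh.le, ← smul_sub, zero_add,
    ← intervalIntegral.integral_add_adjacent_intervals (hint 0 h) (hint h a),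
    ← intervalIntegral.integral_add_adjacent_intervals (hint h a) (hint a (a + h))]
  congr 1
  abel

theorem dense_fst_generatorGraph (hU : IsContractionC0Semigroup U) :
    Dense (Prod.fst '' generatorGraph U) := fun x ↦ by
  have hlim := tendsto_inv_smul_integral_nhdsGT_zero (hU.continuous_apply_max_zero x) 0
  rw [max_self, hU.map_zero] at hlim
  refine mem_closure_of_tendsto hlim ?_
  filter_upwards [self_mem_nhdsWithin] with a (ha : 0 < a)
  rw [zero_add]
  exact ⟨_, smul_mem_generatorGraph (hU.integral_mem_generatorGraph x ha.le) a⁻¹, rfl⟩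

end IsContractionC0Semigroup

section Chernoff

variable [CompleteSpace E] {F U : ℝ → E →L[𝕜] E}

theorem norm_apply_stepResolvent_sub_le (hU : IsContractionC0Semigroup U) {L : E →L[𝕜] E}
    (hL : ‖L‖ ≤ 1) {h s : ℝ} (hh : 0 < h) (hs : 0 ≤ s) (x y : E) :
    ‖L (stepResolvent L h (U s x)) - stepResolvent L h (U (s + h) x)‖ ≤
      h * (‖stepResolvent L h (U s (x - y)) - U s x‖ + ‖h⁻¹ • (U h x - x) - y‖) := by
  set R := stepResolvent L h
  have hsplit : L (R (U s x)) - R (U (s + h) x) =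
      h • ((R (U s (x - y)) - U s x) - R (U s (h⁻¹ • (U h x - x) - y))) := by
    rw [apply_stepResolvent hL hh, hU.apply_add hs hh.le]
    simp only [map_sub, ContinuousLinearMap.map_smul_of_tower, smul_sub, smul_inv_smul₀ hh.ne']
    abel
  have hquot : ‖R (U s (h⁻¹ • (U h x - x) - y))‖ ≤ ‖h⁻¹ • (U h x - x) - y‖ :=
    (norm_apply_le_of_opNorm_le_one (opNorm_stepResolvent_le_one hL hh.le) _).trans
      (hU.norm_apply_le hs _)
  rw [hsplit, norm_smul_of_nonneg hh.le]
  gcongr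
  exact norm_sub_le_of_le le_rfl hquot

theorem tendstoUniformlyOn_stepResolvent (hF : ∀ {t : ℝ}, 0 ≤ t → ‖F t‖ ≤ 1)
    (hU : IsContractionC0Semigroup U) (hcore : generatorGraph U ⊆ closure (generatorGraph F))
    {ι : Type*} {l : Filter ι} {h : ι → ℝ} (hh : ∀ i, 0 ≤ h i) (hlim : Tendsto h l (𝓝[>] 0))
    {x y : E} (hxy : (x, y) ∈ generatorGraph U) (t : ℝ) :
    TendstoUniformlyOn (fun i s ↦ stepResolvent (F (h i)) (h i) (U s (x - y))) (fun s ↦ U s x) l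
      (Set.Icc 0 t) :=
  tendstoUniformlyOn_apply_comp_of_opNorm_le
    (fun i ↦ opNorm_stepResolvent_le_one (hF (hh i)) (hh i)) isCompact_Icc
    ((hU.continuousOn_apply _).mono Set.Icc_subset_Ici_self) fun s hs ↦ by
      simpa only [map_sub] using tendsto_stepResolvent_of_mem_closure_generatorGraph hF hh hlim
        (hcore (hU.map_mem_generatorGraph hxy hs.1))

theorem tendsto_pow_stepResolvent_sub_of_mem_generatorGraph (hF : ∀ {t : ℝ}, 0 ≤ t → ‖F t‖ ≤ 1)
    (hU : IsContractionC0Semigroup U) (hcore : generatorGraph U ⊆ closure (generatorGraph F))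
    {t : ℝ} (ht : 0 < t) {x y : E} (hxy : (x, y) ∈ generatorGraph U) :
    Tendsto (fun n : ℕ ↦ (F (t / n) ^ n) (stepResolvent (F (t / n)) (t / n) x) -
      stepResolvent (F (t / n)) (t / n) (U t x)) atTop (𝓝 0) := by
  have hlim := tendsto_div_natCast_nhdsGT_zero ht
  have hunif := tendstoUniformlyOn_stepResolvent hF hU hcore (fun n : ℕ ↦ by positivity) hlim hxy t
  have hquot : Tendsto (fun n : ℕ ↦ (t / n)⁻¹ • (U (t / n) x - x)) atTop (𝓝 y) := hxy.comp hlim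
  rw [Metric.tendsto_nhds]
  intro ε hε
  have hδ : 0 < ε / (3 * t) := by positivity
  filter_upwards [Metric.tendstoUniformlyOn_iff.1 hunif _ hδ, Metric.tendsto_nhds.1 hquot _ hδ,
    eventually_gt_atTop 0] with n hres hdiff hn
  set h := t / n
  have hh : 0 < h := by positivity
  have hnh : n * h = t := mul_div_cancel₀ t (by positivity)
  have hL := hF hh.le
  have hstep (k) (hk : k < n) : ‖F h (stepResolvent (F h) h (U (k * h) x)) -
      stepResolvent (F h) h (U ((k + 1 : ℕ) * h) x)‖ ≤ h * (ε / (3 * t) + ε / (3 * t)) := by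
    have hkt : k * h ≤ t := by rw [← hnh]; gcongr
    rw [Nat.cast_succ, add_one_mul]
    refine (norm_apply_stepResolvent_sub_le hU hL hh (by positivity) x y).trans ?_
    gcongr
    · simpa only [dist_eq_norm'] using (hres (k * h) ⟨by positivity, hkt⟩).le
    · simpa only [dist_eq_norm] using hdiff.le
  have htotal := norm_pow_apply_sub_le hL (y := fun k ↦ stepResolvent (F h) h (U (k * h) x)) hstep
  rw [Nat.cast_zero, zero_mul, hU.map_zero, hnh, ← mul_assoc, hnh] at htotal
  rw [dist_zero_right]
  calc _ ≤ t * (ε / (3 * t) + ε / (3 * t)) := htotal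
    _ = 2 / 3 * ε := by field_simp; ring
    _ < ε := by linarith

theorem tendsto_pow_stepResolvent_sub (hF : ∀ {t : ℝ}, 0 ≤ t → ‖F t‖ ≤ 1)
    (hU : IsContractionC0Semigroup U) (hcore : generatorGraph U ⊆ closure (generatorGraph F))
    {t : ℝ} (ht : 0 < t) (x : E) :
    Tendsto (fun n : ℕ ↦ (F (t / n) ^ n) (stepResolvent (F (t / n)) (t / n) x) -
      stepResolvent (F (t / n)) (t / n) (U t x)) atTop (𝓝 0) := by
  let R (n : ℕ) := stepResolvent (F (t / n)) (t / n)
  have hbound (n : ℕ) : ‖F (t / n) ^ n * R n - R n * U t‖ ≤ 1 * 1 + 1 * 1 := by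
    have hL : ‖F (t / n)‖ ≤ 1 := hF (by positivity)
    have hR : ‖R n‖ ≤ 1 := opNorm_stepResolvent_le_one hL (by positivity)
    exact norm_sub_le_of_le (norm_mul_le_of_le (opNorm_pow_le_one hL n) hR)
      (norm_mul_le_of_le hR (hU.opNorm_le_one ht.le))
  refine tendsto_apply_of_mem_closure_of_opNorm_le hbound (f := fun _ ↦ 0) continuous_const ?_
    (hU.dense_fst_generatorGraph x)
  rintro _ ⟨p, hp, rfl⟩
  exact tendsto_pow_stepResolvent_sub_of_mem_generatorGraph hF hU hcore ht hp

theorem tendsto_pow_apply_of_mem_generatorGraph (hF : ∀ {t : ℝ}, 0 ≤ t → ‖F t‖ ≤ 1)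
    (hU : IsContractionC0Semigroup U) (hcore : generatorGraph U ⊆ closure (generatorGraph F))
    {t : ℝ} (ht : 0 < t) {x y : E} (hxy : (x, y) ∈ generatorGraph U) :
    Tendsto (fun n : ℕ ↦ (F (t / n) ^ n) x) atTop (𝓝 (U t x)) := by
  let R (n : ℕ) := stepResolvent (F (t / n)) (t / n)
  have hres {p : E × E} (hp : p ∈ generatorGraph U) :
      Tendsto (fun n ↦ R n (p.1 - p.2)) atTop (𝓝 p.1) :=
    tendsto_stepResolvent_of_mem_closure_generatorGraph hF (fun n : ℕ ↦ by positivity)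
      (tendsto_div_natCast_nhdsGT_zero ht) (hcore hp)
  have hstart : Tendsto (fun n : ℕ ↦ (F (t / n) ^ n) (x - R n (x - y))) atTop (𝓝 0) := by
    refine squeeze_zero_norm (fun n ↦ norm_apply_le_of_opNorm_le_one
      (opNorm_pow_le_one (hF (by positivity)) n) _) ?_
    simpa only [sub_self, norm_zero] using ((hres hxy).const_sub x).norm
  have hend : Tendsto (fun n ↦ R n (U t (x - y))) atTop (𝓝 (U t x)) := by
    simpa only [map_sub] using hres (hU.map_mem_generatorGraph hxy ht.le)
  have hsum := (hstart.add (tendsto_pow_stepResolvent_sub hF hU hcore ht (x - y))).add hend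
  rw [zero_add, zero_add] at hsum
  refine hsum.congr fun n ↦ ?_
  rw [map_sub (F (t / n) ^ n), sub_add_sub_cancel, sub_add_cancel]

theorem chernoff_product_formula (hF0 : F 0 = 1) (hF : ∀ {t : ℝ}, 0 ≤ t → ‖F t‖ ≤ 1)
    (hU : IsContractionC0Semigroup U) (hcore : generatorGraph U ⊆ closure (generatorGraph F))
    {t : ℝ} (ht : 0 ≤ t) (x : E) :
    Tendsto (fun n : ℕ ↦ (F (t / n) ^ n) x) atTop (𝓝 (U t x)) := by
  rcases ht.eq_or_lt with rfl | htpos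
  · simp [hF0, hU.map_zero]
  refine tendsto_apply_of_mem_closure_of_opNorm_le
    (fun n ↦ opNorm_pow_le_one (hF (by positivity)) n) (U t).continuous ?_
    (hU.dense_fst_generatorGraph x)
  rintro _ ⟨p, hp, rfl⟩
  exact tendsto_pow_apply_of_mem_generatorGraph hF hU hcore htpos hp

end Chernoff

theorem graph_add_subset_generatorGraph_comp {S T : ℝ → E →L[𝕜] E} {A B : E →ₗ.[𝕜] E}
    (hS : IsContractionC0Semigroup S) (hA : IsC0GeneratorOf A S) (hB : IsC0GeneratorOf B T) :
    ((A + B).graph : Set (E × E)) ⊆ generatorGraph fun t ↦ S t ∘L T t := by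
  intro p hp
  obtain ⟨x, rfl⟩ := (LinearPMap.mem_graph_iff' _).1 hp
  exact hS.comp_mem_generatorGraph (hA.subset (A.mem_graph ⟨x, x.2.1⟩))
    (hB.subset (B.mem_graph ⟨x, x.2.2⟩))

theorem chernoff_trotter_product_formula_general [CompleteSpace E] {S T U : ℝ → E →L[𝕜] E}
    (hS : IsContractionC0Semigroup S) (hT : IsContractionC0Semigroup T)
    (hU : IsContractionC0Semigroup U) {A B C : E →ₗ.[𝕜] E} (hA : IsC0GeneratorOf A S)
    (hB : IsC0GeneratorOf B T) (hC : IsC0GeneratorOf C U)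
    (hcore : C.graph ≤ (A + B).graph.topologicalClosure) {t : ℝ} (ht : 0 ≤ t) (x : E) :
    Tendsto (fun n : ℕ ↦ ((S (t / n) ∘L T (t / n)) ^ n) x) atTop (𝓝 (U t x)) := by
  refine chernoff_product_formula (F := fun t ↦ S t ∘L T t) ?_ (fun ht ↦ ?_) hU ?_ ht x
  · rw [hS.map_zero, hT.map_zero]
    rfl
  · exact (norm_mul_le _ _).trans
      (mul_le_one₀ (hS.opNorm_le_one ht) (norm_nonneg _) (hT.opNorm_le_one ht))
  · rw [← hC]
    exact Set.Subset.trans hcore (closure_mono (graph_add_subset_generatorGraph_comp hS hA hB))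

end Generator

section InnerProductSpace

variable {H : Type*} [NormedAddCommGroup H] [InnerProductSpace ℂ H] {S : ℝ → H →L[ℂ] H}
  {A : H →ₗ.[ℂ] H}

theorem IsContractionSemigroup.isContractionC0Semigroup (hS : IsContractionSemigroup S) :
    IsContractionC0Semigroup S :=
  ⟨hS.1, hS.2.1 _ _, hS.2.2.1 _, hS.2.2.2⟩

theorem IsGeneratorOf.isC0GeneratorOf (hA : IsGeneratorOf A S) : IsC0GeneratorOf A S := by
  refine Set.Subset.antisymm (fun p hp ↦ ?_) fun p hp ↦ ?_
  · obtain ⟨x, rfl⟩ := (LinearPMap.mem_graph_iff' _).1 hp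
    exact hA.2 x
  · have hmem : p.1 ∈ A.domain := (hA.1 p.1).2 ⟨p.2, hp⟩
    exact (LinearPMap.mem_graph_iff _).2
      ⟨⟨p.1, hmem⟩, rfl, tendsto_nhds_unique (hA.2 ⟨p.1, hmem⟩) hp⟩

end InnerProductSpace

/-- **Chernoff/Trotter product formula.**  Let `S`, `T`, `U` be strongly continuous
one-parameter contraction semigroups on a complex Hilbert space `H`, with generators
`A`, `B`, `C`.  If the algebraic sum `A + B` (defined on `dom A ⊓ dom B`) is closable
with closure `C`, then for every `x ∈ H` and `t ≥ 0`,
`(S(t/n) ∘ T(t/n))ⁿ x → U(t) x` as `n → ∞`. -/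
theorem chernoff_trotter_product_formula
    {H : Type*} [NormedAddCommGroup H] [InnerProductSpace ℂ H] [CompleteSpace H]
    (S T U : ℝ → H →L[ℂ] H)
    (hS : IsContractionSemigroup S) (hT : IsContractionSemigroup T)
    (hU : IsContractionSemigroup U)
    (A B C : H →ₗ.[ℂ] H)
    (hA : IsGeneratorOf A S) (hB : IsGeneratorOf B T) (hC : IsGeneratorOf C U)
    (hclosable : (A + B).IsClosable)
    (hclosure : (A + B).closure = C) :
    ∀ (x : H) (t : ℝ), 0 ≤ t →
      Tendsto (fun n : ℕ => (((S (t / n)).comp (T (t / n))) ^ n) x)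
        atTop (𝓝 (U t x)) :=
  fun x _ ht ↦ chernoff_trotter_product_formula_general hS.isContractionC0Semigroup
    hT.isContractionC0Semigroup hU.isContractionC0Semigroup hA.isC0GeneratorOf hB.isC0GeneratorOf
    hC.isC0GeneratorOf (hclosure ▸ hclosable.graph_closure_eq_closure_graph.ge) ht x
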